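/- Let Γ = (G, σ) be a signed graph on a finite nonempty vertex set of n vertices with balanced clique number ω_b(Γ) ≥ 1. Then the largest eigenvalue of its adjacency matrix satisfies λ₁(A(Γ)) ≤ n·(1 − 1/ω_b(Γ)). -/

import Mathlib

open scoped Classical
open Finset

variable {V : Type*}

noncomputable def adjMx [Fintype V] (G : SimpleGraph V) : Matrix V V ℝ :=
  Matrix.of fun u v => if G.Adj u v then 1 else 0

noncomputable def degMx [Fintype V] [DecidableEq V] (G : SimpleGraph V) : Matrix V V ℝ :=
  Matrix.diagonal fun v => ∑ u, if G.Adj v u then (1 : ℝ) else 0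

noncomputable def signlessLap [Fintype V] [DecidableEq V] (G : SimpleGraph V) : Matrix V V ℝ :=
  degMx G + adjMx G

lemma adjMx_isHermitian [Fintype V] (G : SimpleGraph V) : (adjMx G).IsHermitian := by
  ext u v
  simp [adjMx, Matrix.conjTranspose_apply, SimpleGraph.adj_comm]

lemma signlessLap_isHermitian [Fintype V] [DecidableEq V] (G : SimpleGraph V) :
    (signlessLap G).IsHermitian :=
  (Matrix.isHermitian_diagonal _).add (adjMx_isHermitian G)

noncomputable def maxEig [Fintype V] [DecidableEq V] {A : Matrix V V ℝ}
    (hA : A.IsHermitian) : ℝ := ⨆ v, hA.eigenvalues v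

noncomputable def qIndex [Fintype V] [DecidableEq V] (G : SimpleGraph V) : ℝ :=
  maxEig (signlessLap_isHermitian G)

noncomputable def lambda1 [Fintype V] [DecidableEq V] (G : SimpleGraph V) : ℝ :=
  maxEig (adjMx_isHermitian G)

/-- Maximum size of a clique of `G` containing vertex `v`. -/
noncomputable def cliqueAt (G : SimpleGraph V) (v : V) : ℕ :=
  sSup {n | ∃ s : Finset V, G.IsNClique n s ∧ v ∈ s}

/-- Maximum size of a clique of `G` containing both `u` and `v`. -/
noncomputable def cliqueAtEdge (G : SimpleGraph V) (u v : V) : ℕ :=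
  sSup {n | ∃ s : Finset V, G.IsNClique n s ∧ u ∈ s ∧ v ∈ s}

/-- A balanced clique of the signed graph `(G, σ)`: a clique of `G` admitting a switching
function `η` with values `±1` such that `σ u v = η u * η v` on all its edges. -/
def IsBalancedClique (G : SimpleGraph V) (σ : V → V → ℝ) (s : Finset V) : Prop :=
  G.IsClique ↑s ∧ ∃ η : V → ℝ, (∀ v ∈ s, η v = 1 ∨ η v = -1) ∧
    ∀ u ∈ s, ∀ v ∈ s, u ≠ v → σ u v = η u * η v

/-- The balanced clique number of the signed graph `(G, σ)`. -/
noncomputable def balancedCliqueNum (G : SimpleGraph V) (σ : V → V → ℝ) : ℕ :=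
  sSup {n | ∃ s : Finset V, s.card = n ∧ IsBalancedClique G σ s}

/-- Maximum size of a balanced clique of the signed graph `(G, σ)` containing `v`. -/
noncomputable def balancedCliqueAt (G : SimpleGraph V) (σ : V → V → ℝ) (v : V) : ℕ :=
  sSup {n | ∃ s : Finset V, s.card = n ∧ IsBalancedClique G σ s ∧ v ∈ s}

theorem ms_aux {V : Type*} [Fintype V] [DecidableEq V] (H : SimpleGraph V) (k : ℕ) (hk : 1 ≤ k)
    (hH : ∀ s : Finset V, H.IsClique (s : Set V) → s.card ≤ k)
    (M : Matrix V V ℝ) (hM : ∀ u v, M u v = if H.Adj u v then 1 else 0) :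
    ∀ (m : ℕ) (y : V → ℝ), (∀ v, 0 ≤ y v) → (Finset.univ.filter fun v => y v ≠ 0).card = m →
      y ⬝ᵥ M.mulVec y ≤ (1 - 1 / (k : ℝ)) * (∑ v, y v) ^ 2 := by
  have hsym : M.transpose = M := by
    ext u v
    simp [hM, SimpleGraph.adj_comm]
  have hdiag : ∀ v, M v v = 0 := by
    intro v
    simp [hM]
  intro m
  induction m using Nat.strong_induction_on with
  | _ m ih =>
  intro y hy hm
  by_cases hc : H.IsClique ((Finset.univ.filter fun v => y v ≠ 0 : Finset V) : Set V)
  · have hcard := hH _ hc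
    have h1 : y ⬝ᵥ M.mulVec y = (∑ v, y v) ^ 2 - ∑ v, y v ^ 2 := by
      rw [eq_sub_iff_add_eq, sq, Finset.sum_mul, dotProduct, ← Finset.sum_add_distrib]
      refine Finset.sum_congr rfl fun u _ => ?_
      rw [sq, ← mul_add]
      by_cases hu : y u = 0
      · simp [hu]
      · congr 1
        have : y u = ∑ v, if u = v then y v else 0 := by simp
        rw [this, Matrix.mulVec, dotProduct, ← Finset.sum_add_distrib]
        refine Finset.sum_congr rfl fun v _ => ?_
        by_cases huv : u = v
        · subst huv
          simp [hdiag]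
        · by_cases hv : y v = 0
          · simp [hv]
          · have : H.Adj u v := hc (by simpa using hu) (by simpa using hv) huv
            simp [hM, this, huv]
    have h2 : (∑ v, y v) ^ 2 ≤ k * ∑ v, y v ^ 2 := by
      have h3 : ∑ v, y v = ∑ v ∈ Finset.univ.filter (fun v => y v ≠ 0), y v := by
        rw [Finset.sum_filter_ne_zero]
      have h4 : ∑ v ∈ Finset.univ.filter (fun v => y v ≠ 0), y v ^ 2 ≤ ∑ v, y v ^ 2 :=
        Finset.sum_le_sum_of_subset_of_nonneg (Finset.filter_subset _ _)
          fun v _ _ => sq_nonneg _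
      have h5 := sq_sum_le_card_mul_sum_sq (s := Finset.univ.filter (fun v => y v ≠ 0)) (f := y)
      rw [h3]
      refine h5.trans ?_
      have h6 : (((Finset.univ.filter (fun v => y v ≠ 0)).card : ℕ) : ℝ) ≤ k := by
        exact_mod_cast hcard
      refine mul_le_mul h6 h4 (Finset.sum_nonneg fun v _ => sq_nonneg _) (by positivity)
    have hk0 : (0 : ℝ) < k := by exact_mod_cast hk
    have h7 : (1 / (k : ℝ)) * (∑ v, y v) ^ 2 ≤ ∑ v, y v ^ 2 := by
      rw [one_div, inv_mul_le_iff₀ hk0]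
      exact h2
    rw [h1]
    linarith
  · have hex : ∃ u v, y u ≠ 0 ∧ y v ≠ 0 ∧ u ≠ v ∧ ¬ H.Adj u v ∧
        M.mulVec y v ≤ M.mulVec y u := by
      have : ∃ u v, y u ≠ 0 ∧ y v ≠ 0 ∧ u ≠ v ∧ ¬ H.Adj u v := by
        by_contra hcon
        push Not at hcon
        apply hc
        intro u hu v hv huv
        exact hcon u v (by simpa using hu) (by simpa using hv) huv
      obtain ⟨u, v, hu, hv, huv, hadj⟩ := this
      rcases le_total (M.mulVec y v) (M.mulVec y u) with h | h
      · exact ⟨u, v, hu, hv, huv, hadj, h⟩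
      · exact ⟨v, u, hv, hu, huv.symm, fun h => hadj h.symm, h⟩
    obtain ⟨u, v, hu, hv, huv, hadj, hle⟩ := hex
    let d : V → ℝ := Pi.single u (y v) - Pi.single v (y v)
    have hsum : ∑ w, (y + d) w = ∑ w, y w := by
      simp [d, Finset.sum_add_distrib]
    have hsub : (Finset.univ.filter fun w => (y + d) w ≠ 0) ⊂
        (Finset.univ.filter fun w => y w ≠ 0) := by
      rw [Finset.ssubset_iff_of_subset]
      · exact ⟨v, by simpa using hv, by simp [d, huv.symm]⟩
      · intro w
        simp only [Finset.mem_filter, Finset.mem_univ, true_and]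
        intro hw h0
        apply hw
        have h1 : w ≠ u := by rintro rfl; exact hu h0
        have h2 : w ≠ v := by rintro rfl; exact hv h0
        simp [d, h0, h1, h2]
    have hnn : ∀ w, 0 ≤ (y + d) w := by
      intro w
      have := hy w
      have := hy v
      by_cases h1 : w = u
      · subst h1
        simp [d, huv]
        linarith
      · by_cases h2 : w = v
        · subst h2
          simp [d, h1]
        · simp [d, h1, h2, hy w]
    have key := ih _ (by rw [← hm]; exact Finset.card_lt_card hsub) (y + d) hnn rfl
    rw [hsum] at key
    refine le_trans ?_ key
    have hdd : d ⬝ᵥ M.mulVec d = 0 := by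
      have hadj2 : ¬ H.Adj v u := fun h => hadj h.symm
      simp [d, Matrix.mulVec_sub, sub_dotProduct, hM, hadj, hadj2]
    have hyd : y ⬝ᵥ M.mulVec d = d ⬝ᵥ M.mulVec y := by
      rw [Matrix.dotProduct_mulVec, ← Matrix.mulVec_transpose, hsym, dotProduct_comm]
    have hdy : d ⬝ᵥ M.mulVec y = y v * (M.mulVec y u - M.mulVec y v) := by
      simp [d, sub_dotProduct, mul_sub]
    rw [Matrix.mulVec_add, add_dotProduct, dotProduct_add, dotProduct_add, hdd, hyd, hdy]
    have := mul_nonneg (hy v) (sub_nonneg.2 hle)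
    linarith

/-- Wang–Yan–Qian: for a signed graph `Γ` on `n ≥ 1` vertices with balanced clique number
`ω_b(Γ) ≥ 1`, `λ₁(A(Γ)) ≤ n (1 - 1/ω_b(Γ))`. -/
theorem stmt17 {V : Type*} [Fintype V] [DecidableEq V] [Nonempty V]
    (G : SimpleGraph V)
    (σ : V → V → ℝ) (hσsymm : ∀ u v, σ u v = σ v u)
    (hσ : ∀ u v, G.Adj u v → σ u v = 1 ∨ σ u v = -1)
    (hωb : 1 ≤ balancedCliqueNum G σ)
    (A : Matrix V V ℝ) (hAdef : ∀ u v, A u v = if G.Adj u v then σ u v else 0)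
    (hA : A.IsHermitian) :
    maxEig hA ≤ (Fintype.card V : ℝ) * (1 - 1 / (balancedCliqueNum G σ : ℝ)) := by
  have hbdd : BddAbove {n | ∃ s : Finset V, s.card = n ∧ IsBalancedClique G σ s} := by
    refine ⟨Fintype.card V, ?_⟩
    rintro n ⟨s, rfl, -⟩
    exact Finset.card_le_univ s
  have hk0 : (1 : ℝ) ≤ (balancedCliqueNum G σ : ℝ) := by exact_mod_cast hωb
  unfold maxEig
  refine ciSup_le fun j => ?_
  obtain ⟨x, hx0, hx⟩ : ∃ x : V → ℝ, x ≠ 0 ∧ A.mulVec x = hA.eigenvalues j • x := by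
    refine ⟨_, ?_, hA.mulVec_eigenvectorBasis j⟩
    intro h
    apply hA.eigenvectorBasis.orthonormal.ne_zero j
    ext i
    exact congrFun h i
  let η : V → ℝ := fun v => if 0 ≤ x v then 1 else -1
  have hη : ∀ v, η v = 1 ∨ η v = -1 := by
    intro v
    by_cases h : 0 ≤ x v <;> simp [η, h]
  have hxη : ∀ v, x v = η v * |x v| := by
    intro v
    by_cases h : 0 ≤ x v
    · simp [η, h, abs_of_nonneg h]
    · simp [η, h, abs_of_neg (not_le.1 h)]
  let H : SimpleGraph V :=
    { Adj := fun u v => G.Adj u v ∧ σ u v = η u * η v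
      symm := ⟨fun u v h => ⟨h.1.symm, by rw [hσsymm, h.2, mul_comm]⟩⟩
      loopless := ⟨fun u h => G.loopless.irrefl u h.1⟩ }
  have hH : ∀ s : Finset V, H.IsClique (s : Set V) → s.card ≤ balancedCliqueNum G σ := by
    intro s hs
    refine le_csSup hbdd ⟨s, rfl, fun u hu v hv huv => (hs hu hv huv).1, η, fun v _ => hη v, ?_⟩
    intro u hu v hv huv
    exact (hs hu hv huv).2
  have hms := ms_aux H (balancedCliqueNum G σ) hωb hH
    (Matrix.of fun u v => if H.Adj u v then (1 : ℝ) else 0) (fun u v => by rw [Matrix.of_apply]; congr) _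
    (fun v => |x v|) (fun v => abs_nonneg _) rfl
  have hpos : 0 < ∑ v, x v ^ 2 := by
    obtain ⟨v, hv⟩ := Function.ne_iff.1 hx0
    exact Finset.sum_pos' (fun v _ => sq_nonneg _)
      ⟨v, Finset.mem_univ _, by have : x v ≠ 0 := hv
                                positivity⟩
  have hxx : x ⬝ᵥ A.mulVec x = hA.eigenvalues j * ∑ v, x v ^ 2 := by
    rw [hx, dotProduct_smul, smul_eq_mul]
    simp [dotProduct, sq]
  have hle : x ⬝ᵥ A.mulVec x ≤ (fun v => |x v|) ⬝ᵥ
      (Matrix.of fun u v => if H.Adj u v then (1 : ℝ) else 0).mulVec (fun v => |x v|) := by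
    simp only [dotProduct, Matrix.mulVec, Finset.mul_sum]
    refine Finset.sum_le_sum fun u _ => Finset.sum_le_sum fun v _ => ?_
    have hprod : 0 ≤ |x u| * |x v| := by positivity
    have e : x u * (A u v * x v) = (η u * η v * A u v) * (|x u| * |x v|) := by
      conv_lhs => rw [hxη u, hxη v]
      ring
    have e2 : |x u| * ((Matrix.of fun u v => if H.Adj u v then (1 : ℝ) else 0) u v * |x v|)
        = (if H.Adj u v then (1 : ℝ) else 0) * (|x u| * |x v|) := by
      rw [Matrix.of_apply]
      ring
    rw [e, e2]
    refine mul_le_mul_of_nonneg_right ?_ hprod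
    rw [hAdef]
    by_cases hG : G.Adj u v
    · by_cases hs : σ u v = η u * η v
      · have : H.Adj u v := ⟨hG, hs⟩
        rw [if_pos hG, if_pos this, hs]
        rcases hη u with a | a <;> rcases hη v with b | b <;> rw [a, b] <;> norm_num
      · have : ¬ H.Adj u v := fun h => hs h.2
        rw [if_pos hG, if_neg this]
        rcases hη u with a | a <;> rcases hη v with b | b <;> rcases hσ u v hG with c | c <;>
          rw [a, b, c] at hs ⊢ <;> first | (norm_num; done) | exact absurd (by norm_num) hs
    · have : ¬ H.Adj u v := fun h => hG h.1
      rw [if_neg hG, if_neg this, mul_zero]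
  have hcs : (∑ v, |x v|) ^ 2 ≤ Fintype.card V * ∑ v, x v ^ 2 := by
    have := sq_sum_le_card_mul_sum_sq (s := (Finset.univ : Finset V)) (f := fun v => |x v|)
    simpa using this
  have hc : 0 ≤ 1 - 1 / (balancedCliqueNum G σ : ℝ) := by
    rw [sub_nonneg, div_le_one (by linarith)]
    exact hk0
  have hfin := mul_le_mul_of_nonneg_left hcs hc
  refine le_of_mul_le_mul_right ?_ hpos
  rw [← hxx]
  calc _ ≤ _ := hle
    _ ≤ _ := hms
    _ ≤ _ := hfin
    _ = _ := by ring
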